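/- Let A and B be FDDS, let α be the number of unroll trees of 𝒰(B), and let n ≥ 2α + depth(B). Then 𝒰(A) = 𝒰(B) if and only if 𝒰(A)|_n = 𝒰(B)|_n. -/

import Mathlib

noncomputable section

/-- A rooted tree (finite or infinite), presented by its levels: `level n` is the
set of vertices of depth `n` (finitely many at each depth), every vertex of depth
`n+1` has a parent of depth `n` (edges are directed towards the root), and there
is a unique vertex of depth `0`, the root. -/
structure RTree : Type 1 where
  level : ℕ → Type
  parent : ∀ n, level (n + 1) → level n
  fin : ∀ n, Fintype (level n)
  root : level 0
  root_unique : ∀ x : level 0, x = root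

namespace RTree

/-- Isomorphism of rooted trees: a depth-preserving bijection of the vertices
commuting with the parent maps (hence root- and edge-preserving). -/
def Iso (t s : RTree) : Prop :=
  ∃ e : ∀ n, t.level n ≃ s.level n,
    ∀ (n : ℕ) (x : t.level (n + 1)), e n (t.parent n x) = s.parent n (e (n + 1) x)

/-- The (layer-by-layer direct) product of two rooted trees. -/
def tprod (t s : RTree) : RTree where
  level n := t.level n × s.level n
  parent n x := (t.parent n x.1, s.parent n x.2)
  fin n := by haveI := t.fin n; haveI := s.fin n; infer_instance
  root := (t.root, s.root)
  root_unique x := by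
    obtain ⟨a, b⟩ := x
    rw [t.root_unique a, s.root_unique b]

/-- The cut of a tree at depth `n`: the subtree induced on vertices of depth `≤ n`. -/
def tcut (t : RTree) (n : ℕ) : RTree where
  level k := PLift (k ≤ n) × t.level k
  parent k x := (⟨Nat.le_of_succ_le x.1.down⟩, t.parent k x.2)
  fin k := by
    haveI := t.fin k
    haveI : Finite (PLift (k ≤ n)) := Finite.of_subsingleton
    exact Fintype.ofFinite _
  root := (⟨Nat.zero_le n⟩, t.root)
  root_unique x := by
    obtain ⟨a, b⟩ := x
    rw [t.root_unique b]

/-- A tree is finite when it has no vertices below some depth. -/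
def IsFinite (t : RTree) : Prop := ∃ N, ∀ k, N ≤ k → IsEmpty (t.level k)

/-- The depth of a (finite) tree: the largest depth of one of its vertices. -/
def depth (t : RTree) : ℕ := sSup {n | Nonempty (t.level n)}

/-- `tpow t k` is the `k`-fold product `t^k` of the tree `t` with itself (for `k ≥ 1`). -/
def tpow (t : RTree) : ℕ → RTree
  | 0 => t
  | 1 => t
  | n + 2 => tprod t (tpow t (n + 1))

/-- Iterated parent map, sending a vertex of depth `k+1` to its ancestor of depth 1. -/
def down (t : RTree) : ∀ k, t.level (k + 1) → t.level 1
  | 0, x => x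
  | k + 1, x => t.down k (t.parent (k + 1) x)

/-- The subtree of `t` rooted at the depth-1 vertex `v` (a child of the root). -/
def subtreeAt (t : RTree) (v : t.level 1) : RTree where
  level k := { x : t.level (k + 1) // t.down k x = v }
  parent k x := ⟨t.parent (k + 1) x.1, x.2⟩
  fin k := by haveI := t.fin (k + 1); exact Fintype.ofFinite _
  root := ⟨v, rfl⟩
  root_unique x := Subtype.ext x.2

/-- `D t`: the forest (here, a list) of the subtrees of `t` rooted at the
children of the root. -/
def D (t : RTree) : List RTree := (@Finset.univ _ (t.fin 1)).toList.map t.subtreeAt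

end RTree

/-- A forest is a finite multiset of rooted trees; we represent it by a list of
(concrete) trees, equality of forests being `ForestEq` below. -/
abbrev Forest := List RTree

/-- Equality of forests as multisets of isomorphism classes of rooted trees. -/
def ForestEq (F G : Forest) : Prop := Multiset.Rel RTree.Iso (↑F) (↑G)

/-- `F` is a sub-multiset of `G` up to isomorphism of rooted trees. -/
def ForestLe (F G : Forest) : Prop :=
  ∃ H : Multiset RTree, H ≤ (↑G : Multiset RTree) ∧ Multiset.Rel RTree.Iso (↑F) H

/-- The product of two forests: the multiset of pairwise products. -/
def fprod (F G : Forest) : Forest := (F.map fun t => G.map fun s => t.tprod s).flatten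

/-- The cut of a forest at depth `n`. -/
def fcut (F : Forest) (n : ℕ) : Forest := F.map (RTree.tcut · n)

/-- The depth of a forest: maximum of the depths of its trees. -/
def fdepth (F : Forest) : ℕ := (F.map RTree.depth).foldr max 0

/-- `fpow F k` is the `k`-fold product `F^k` of the forest `F` with itself (for `k ≥ 1`). -/
def fpow (F : Forest) : ℕ → Forest
  | 0 => F
  | 1 => F
  | n + 2 => fprod F (fpow F (n + 1))

/-- `D` of a forest: the multiset union of the `D` of its trees. -/
def fD (F : Forest) : Forest := (F.map RTree.D).flatten

/-- `R F`: the rooted tree obtained by attaching each tree of the forest `F`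
as a child subtree of a new common root, so that `D (R F) = F`. -/
def rollRoot (F : Forest) : RTree where
  level k :=
    match k with
    | 0 => PUnit
    | k + 1 => Σ i : Fin F.length, (F.get i).level k
  parent k :=
    match k with
    | 0 => fun _ => PUnit.unit
    | k + 1 => fun x => ⟨x.1, (F.get x.1).parent k x.2⟩
  fin k := by
    match k with
    | 0 => exact inferInstanceAs (Fintype PUnit)
    | k + 1 =>
      haveI : ∀ i : Fin F.length, Fintype ((F.get i).level k) := fun i => (F.get i).fin k
      exact inferInstanceAs (Fintype (Σ i : Fin F.length, (F.get i).level k))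
  root := PUnit.unit
  root_unique _ := rfl

/-- The number of vertices of depth `d` in a forest. -/
def levelCard (F : Forest) (d : ℕ) : ℕ := (F.map fun t => @Fintype.card _ (t.fin d)).sum

/-- The total number of vertices of a (finite) forest. -/
def totalCard (F : Forest) : ℕ := ∑ d ∈ Finset.range (fdepth F + 1), levelCard F d

/-- A finite discrete-time dynamical system: a finite set of states together
with a transition function. -/
structure FDDS : Type 1 where
  S : Type
  fin : Fintype S
  f : S → S

namespace FDDS

/-- A state is periodic when some positive iterate of the transition function fixes it. -/
def Periodic (A : FDDS) (u : A.S) : Prop := ∃ p, 1 ≤ p ∧ A.f^[p] u = u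

/-- The least `k` such that `f^[k] s` is periodic. -/
def depthOf (A : FDDS) (s : A.S) : ℕ := sInf {k | A.Periodic (A.f^[k] s)}

/-- The depth of an FDDS: the maximum over states `s` of the least `k` such
that `f^[k] s` is periodic. -/
def depth (A : FDDS) : ℕ := sSup {d | ∃ s : A.S, d = A.depthOf s}

/-- The functional digraph of `A` has a single (weakly) connected component. -/
def Connected (A : FDDS) : Prop := ∀ s s' : A.S, ∃ k l, A.f^[k] s = A.f^[l] s'

/-- The unroll tree of `A` in the state `u`: vertices of depth `k` are the
`k`-th preimages of `u`, the parent of `(v,k+1)` being `(f v, k)`. -/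
def unrollTree (A : FDDS) (u : A.S) : RTree where
  level k := { s : A.S // A.f^[k] s = u }
  parent k x := ⟨A.f x.1, by rw [← Function.iterate_succ_apply]; exact x.2⟩
  fin k := by haveI := A.fin; exact Fintype.ofFinite _
  root := ⟨u, rfl⟩
  root_unique x := Subtype.ext x.2

/-- The unroll of `A`: the multiset of the unroll trees of `A` in its periodic states. -/
def unroll (A : FDDS) : Forest :=
  haveI := A.fin
  letI : DecidablePred A.Periodic := Classical.decPred _
  (Finset.univ.filter A.Periodic).toList.map A.unrollTree

/-- The minimal period of a periodic state. -/
def minPeriod (A : FDDS) (u : A.S) : ℕ := sInf {p | 1 ≤ p ∧ A.f^[p] u = u}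

/-- The periodic state `w` with `f^[i] w = u`: the `i`-th "shift" of `u`
backwards along its cycle. -/
def shiftState (A : FDDS) (u : A.S) (i : ℕ) : A.S := A.f^[i * (A.minPeriod u - 1)] u

/-- The shift `σ^i(t)` of the unroll tree `t = unrollTree A u`: the unroll tree
rooted at the depth-`i` vertex of the infinite branch of `t`. -/
def shiftTree (A : FDDS) (u : A.S) (i : ℕ) : RTree := A.unrollTree (A.shiftState u i)

/-- The unroll tree of `A` in `u` admits a periodic pattern of size `p ≥ 1`,
i.e. `σ^p(t_u) = t_u`. -/
def PatternSize (A : FDDS) (u : A.S) (p : ℕ) : Prop :=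
  1 ≤ p ∧ RTree.Iso (A.shiftTree u p) (A.unrollTree u)

/-- `|Shift(t_u)|`: the smallest size of a periodic pattern of the unroll tree of `A` in `u`. -/
def shiftCount (A : FDDS) (u : A.S) : ℕ := sInf {p | A.PatternSize u p}

end FDDS

/-- A rooted tree is an unroll tree when it is isomorphic to the unroll tree of
some FDDS in one of its periodic states. -/
def IsUnrollTree (x : RTree) : Prop :=
  ∃ (A : FDDS) (u : A.S), A.Periodic u ∧ RTree.Iso x (A.unrollTree u)

end

noncomputable section

namespace FDDS

/-- Codes of trees cut at a given depth. -/
def Code : ℕ → Type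
  | 0 => PUnit
  | n + 1 => Code n → ℕ

/-- The code of the tree of iterated preimages of a state, cut at depth `n`. -/
def code (A : FDDS) : ∀ n, A.S → Code n
  | 0, _ => PUnit.unit
  | n + 1, s => fun c => Nat.card {x : A.S // A.f x = s ∧ A.code n x = c}

theorem code_succ_of_equiv {A B : FDDS} {n : ℕ} {s : A.S} {t : B.S}
    (σ : {x : A.S // A.f x = s} ≃ {y : B.S // B.f y = t})
    (h : ∀ x, A.code n x.1 = B.code n (σ x).1) : A.code (n + 1) s = B.code (n + 1) t := by
  funext c
  refine Nat.card_congr ?_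
  calc {x : A.S // A.f x = s ∧ A.code n x = c}
      ≃ {x : {x : A.S // A.f x = s} // A.code n x.1 = c} :=
        (Equiv.subtypeSubtypeEquivSubtypeInter (fun x => A.f x = s) (fun x => A.code n x = c)).symm
    _ ≃ {y : {y : B.S // B.f y = t} // B.code n y.1 = c} :=
        σ.subtypeEquiv (fun x => by rw [h x])
    _ ≃ {y : B.S // B.f y = t ∧ B.code n y = c} :=
        Equiv.subtypeSubtypeEquivSubtypeInter (fun y => B.f y = t) (fun y => B.code n y = c)

theorem equiv_of_code_succ {A B : FDDS} {n : ℕ} {s : A.S} {t : B.S}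
    (h : A.code (n + 1) s = B.code (n + 1) t) :
    ∃ σ : {x : A.S // A.f x = s} ≃ {y : B.S // B.f y = t},
      ∀ x, A.code n x.1 = B.code n (σ x).1 := by
  haveI := A.fin
  haveI := B.fin
  have key : ∀ c : Code n, Nonempty ({x : {x : A.S // A.f x = s} // A.code n x.1 = c} ≃
      {y : {y : B.S // B.f y = t} // B.code n y.1 = c}) := by
    intro c
    have h1 : Nat.card {x : A.S // A.f x = s ∧ A.code n x = c} =
      Nat.card {y : B.S // B.f y = t ∧ B.code n y = c} := congrFun h c
    obtain ⟨e⟩ := Finite.card_eq.1 h1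
    exact ⟨((Equiv.subtypeSubtypeEquivSubtypeInter (fun x => A.f x = s)
      (fun x => A.code n x = c)).trans e).trans
      (Equiv.subtypeSubtypeEquivSubtypeInter (fun y => B.f y = t)
        (fun y => B.code n y = c)).symm⟩
  let e := fun c => Classical.choice (key c)
  refine ⟨((Equiv.sigmaFiberEquiv (fun x : {x : A.S // A.f x = s} => A.code n x.1)).symm.trans
    (Equiv.sigmaCongrRight e)).trans
    (Equiv.sigmaFiberEquiv (fun y : {y : B.S // B.f y = t} => B.code n y.1)), ?_⟩
  intro x
  exact ((e (A.code n x.1)) ⟨x, rfl⟩).2.symm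

theorem code_pred {A B : FDDS} : ∀ {n : ℕ} {s : A.S} {t : B.S},
    A.code (n + 1) s = B.code (n + 1) t → A.code n s = B.code n t
  | 0, _, _, _ => rfl
  | n + 1, s, t, h => by
    obtain ⟨σ, hσ⟩ := equiv_of_code_succ h
    exact code_succ_of_equiv σ (fun x => code_pred (hσ x))

theorem code_mono {A B : FDDS} {m n : ℕ} (hmn : m ≤ n) {s : A.S} {t : B.S}
    (h : A.code n s = B.code n t) : A.code m s = B.code m t := by
  induction n, hmn using Nat.le_induction with
  | base => exact h
  | succ k _ ih => exact ih (code_pred h)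

/-- `s` has an iterated preimage of order `m`. -/
def Has (A : FDDS) (m : ℕ) (s : A.S) : Prop := ∃ y, A.f^[m] y = s

theorem Has.of_code {A B : FDDS} : ∀ {m : ℕ} {s : A.S} {t : B.S},
    A.code m s = B.code m t → A.Has m s → B.Has m t
  | 0, _, t, _, _ => ⟨t, rfl⟩
  | m + 1, s, t, h, ⟨y, hy⟩ => by
    obtain ⟨σ, hσ⟩ := equiv_of_code_succ h
    rw [Function.iterate_succ_apply'] at hy
    obtain ⟨z, hz⟩ := Has.of_code (hσ ⟨_, hy⟩) ⟨y, rfl⟩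
    refine ⟨z, ?_⟩
    rw [Function.iterate_succ_apply', hz]
    exact (σ ⟨_, hy⟩).2

theorem code_succ_of_not_has {A B : FDDS} : ∀ {m : ℕ} {s : A.S} {t : B.S},
    A.code m s = B.code m t → ¬ A.Has m s → A.code (m + 1) s = B.code (m + 1) t
  | 0, s, _, _, h => (h ⟨s, rfl⟩).elim
  | m + 1, s, t, h, hn => by
    obtain ⟨σ, hσ⟩ := equiv_of_code_succ h
    refine code_succ_of_equiv σ (fun x => code_succ_of_not_has (hσ x) ?_)
    rintro ⟨y, hy⟩
    exact hn ⟨y, by rw [Function.iterate_succ_apply', hy]; exact x.2⟩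

theorem Has.mono {A : FDDS} {m n : ℕ} (hmn : m ≤ n) {s : A.S} (h : A.Has n s) : A.Has m s := by
  obtain ⟨y, hy⟩ := h
  refine ⟨A.f^[n - m] y, ?_⟩
  rw [← Function.iterate_add_apply, Nat.add_sub_cancel' hmn, hy]

theorem periodic_iff (A : FDDS) (u : A.S) : A.Periodic u ↔ u ∈ Function.periodicPts A.f := by
  constructor
  · rintro ⟨p, hp, h⟩
    exact ⟨p, hp, h⟩
  · rintro ⟨p, hp, h⟩
    exact ⟨p, hp, h⟩

theorem Periodic.iter {A : FDDS} {u : A.S} (h : A.Periodic u) (k : ℕ) :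
    A.Periodic (A.f^[k] u) := by
  obtain ⟨p, hp, h⟩ := h
  refine ⟨p, hp, ?_⟩
  rw [← Function.iterate_add_apply, Nat.add_comm, Function.iterate_add_apply, h]

theorem Periodic.inj {A : FDDS} {u v : A.S} (hu : A.Periodic u) (hv : A.Periodic v)
    (h : A.f u = A.f v) : u = v :=
  (Function.bijOn_periodicPts A.f).injOn ((A.periodic_iff u).1 hu) ((A.periodic_iff v).1 hv) h

/-- The backwards orbit of a periodic state. -/
theorem Periodic.back {A : FDDS} {u : A.S} (h : A.Periodic u) :
    ∃ (p : ℕ) (x : ℕ → A.S), 1 ≤ p ∧ p ≤ A.unroll.length ∧ x 0 = u ∧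
      (∀ i, A.Periodic (x i)) ∧ (∀ i, A.f (x (i + 1)) = x i) ∧ ∀ i, x (i + p) = x i := by
  classical
  haveI := A.fin
  have hp : 0 < Function.minimalPeriod A.f u :=
    Function.minimalPeriod_pos_of_mem_periodicPts ((A.periodic_iff u).1 h)
  have hper : ∀ k, A.f^[k * Function.minimalPeriod A.f u] u = u := fun k =>
    (Function.isPeriodicPt_minimalPeriod A.f u).const_mul k
  obtain ⟨q, hq⟩ : ∃ q, Function.minimalPeriod A.f u = q + 1 := ⟨_, (Nat.succ_pred hp.ne').symm⟩
  refine ⟨Function.minimalPeriod A.f u,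
    fun i => A.f^[q * i] u, hp, ?_, rfl, fun i => h.iter _, ?_, ?_⟩
  · unfold unroll
    rw [List.length_map, Finset.length_toList]
    conv_lhs => rw [← Finset.card_range (Function.minimalPeriod A.f u)]
    refine Finset.card_le_card_of_injOn (fun i => A.f^[i] u) ?_ ?_
    · intro i _
      simp [h.iter i]
    · intro i hi j hj hij
      exact Function.iterate_injOn_Iio_minimalPeriod (by simpa using hi) (by simpa using hj) hij
  · intro i
    show A.f (A.f^[q * (i + 1)] u) = A.f^[q * i] u
    rw [← Function.iterate_succ_apply' A.f, show (q * (i + 1)).succ = q * i + 1 * (q + 1) by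
      simp only [Nat.succ_eq_add_one]; ring, Function.iterate_add_apply, ← hq, hper]
  · intro i
    show A.f^[q * (i + _)] u = A.f^[q * i] u
    rw [Nat.mul_add, Function.iterate_add_apply, hper]

theorem Periodic.has {A : FDDS} {u : A.S} (h : A.Periodic u) (m : ℕ) : A.Has m u := by
  obtain ⟨p, x, -, -, rfl, -, hx, -⟩ := h.back
  refine ⟨x m, ?_⟩
  induction m with
  | zero => rfl
  | succ k ih => rw [Function.iterate_succ_apply, hx, ih]

theorem exists_periodic_iter (A : FDDS) (s : A.S) : ∃ k, A.Periodic (A.f^[k] s) := by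
  haveI := A.fin
  obtain ⟨i, j, hij, h⟩ := Finite.exists_ne_map_eq_of_infinite (fun k : ℕ => A.f^[k] s)
  wlog hlt : i < j generalizing i j
  · exact this j i hij.symm h.symm (by omega)
  refine ⟨i, j - i, by omega, ?_⟩
  rw [← Function.iterate_add_apply, Nat.sub_add_cancel hlt.le]
  exact h.symm

/-- All states become periodic after `d` steps. -/
def DepthLe (A : FDDS) (d : ℕ) : Prop := ∀ s, A.Periodic (A.f^[d] s)

theorem depthLe_depth (A : FDDS) : A.DepthLe A.depth := by
  intro s
  haveI := A.fin
  have h1 : A.Periodic (A.f^[A.depthOf s] s) := Nat.sInf_mem (A.exists_periodic_iter s)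
  have h2 : A.depthOf s ≤ A.depth := by
    refine le_csSup ?_ ⟨s, rfl⟩
    have : {d | ∃ s : A.S, d = A.depthOf s} = Set.range A.depthOf := by
      ext d; simp [eq_comm]
    rw [this]
    exact (Set.finite_range _).bddAbove
  have := h1.iter (A.depth - A.depthOf s)
  rwa [← Function.iterate_add_apply, Nat.sub_add_cancel h2] at this

theorem DepthLe.periodic {A : FDDS} {d m : ℕ} (h : A.DepthLe d) (hm : d ≤ m) {s : A.S}
    (hs : A.Has m s) : A.Periodic s := by
  obtain ⟨y, rfl⟩ := hs.mono hm
  exact h y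

theorem DepthLe.transfer {A B : FDDS} {d : ℕ} (hB : B.DepthLe d)
    (h : ∀ u, A.Periodic u → ∃ v : B.S, A.code (d + 1) u = B.code (d + 1) v) :
    A.DepthLe d := by
  classical
  intro y
  by_contra hy
  have hex : ∃ j, A.Periodic (A.f^[j] (A.f^[d] y)) := A.exists_periodic_iter _
  obtain ⟨j, hj⟩ : ∃ j, Nat.find hex = j + 1 := by
    refine Nat.exists_eq_succ_of_ne_zero ?_
    intro h0
    have := Nat.find_spec hex
    rw [h0] at this
    exact hy this
  have hu := Nat.find_spec hex
  have hw : ¬ A.Periodic (A.f^[j] (A.f^[d] y)) := Nat.find_min hex (by omega)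
  rw [hj, Function.iterate_succ_apply'] at hu
  have hHw : A.Has d (A.f^[j] (A.f^[d] y)) :=
    ⟨A.f^[j] y, by rw [← Function.iterate_add_apply, ← Function.iterate_add_apply, Nat.add_comm]⟩
  generalize A.f^[j] (A.f^[d] y) = w at *
  obtain ⟨v, hv⟩ := h _ hu
  obtain ⟨p, x, -, -, hx0, hxp, hx, -⟩ := hu.back
  obtain ⟨σ, hσ⟩ := equiv_of_code_succ hv
  have hx1 : A.f (x 1) = A.f w := by rw [hx, hx0]
  have e1 : B.Periodic (σ ⟨w, rfl⟩).1 := hB.periodic le_rfl (hHw.of_code (hσ ⟨w, rfl⟩))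
  have e2 : B.Periodic (σ ⟨x 1, hx1⟩).1 :=
    hB.periodic le_rfl (((hxp 1).has d).of_code (hσ ⟨x 1, hx1⟩))
  have e3 := e1.inj e2 ((σ ⟨w, rfl⟩).2.trans (σ ⟨x 1, hx1⟩).2.symm)
  have e4 := σ.injective (Subtype.ext e3)
  have e5 : w = x 1 := congrArg Subtype.val e4
  exact hw (e5 ▸ hxp 1)

theorem code_back {A B : FDDS} {d m : ℕ} (hB : B.DepthLe d) (hm : d ≤ m)
    {u u1 : A.S} {v v1 : B.S} (h : A.code (m + 1) u = B.code (m + 1) v)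
    (hu : A.f u1 = u) (hv : B.f v1 = v) (hu1 : A.Periodic u1) (hv1 : B.Periodic v1) :
    A.code m u1 = B.code m v1 := by
  obtain ⟨σ, hσ⟩ := equiv_of_code_succ h
  have h1 := hσ ⟨u1, hu⟩
  have h2 : B.Periodic (σ ⟨u1, hu⟩).1 := hB.periodic hm ((hu1.has m).of_code h1)
  rw [h2.inj hv1 ((σ ⟨u1, hu⟩).2.trans hv.symm)] at h1
  exact h1

theorem code_lift {A B : FDDS} {d m : ℕ} (hA : A.DepthLe d) (hB : B.DepthLe d) (hm : d ≤ m)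
    {u u1 : A.S} {v v1 : B.S} (h : A.code (m + 1) u = B.code (m + 1) v)
    (hu : A.f u1 = u) (hv : B.f v1 = v) (hu1 : A.Periodic u1) (hv1 : B.Periodic v1)
    (h1 : A.code (m + 1) u1 = B.code (m + 1) v1) :
    A.code (m + 2) u = B.code (m + 2) v := by
  obtain ⟨σ, hσ⟩ := equiv_of_code_succ h
  refine code_succ_of_equiv σ (fun x => ?_)
  by_cases hx : A.Has m x.1
  · have e1 := hA.periodic hm hx
    have e2 := hB.periodic hm (hx.of_code (hσ x))
    rw [e1.inj hu1 (x.2.trans hu.symm), e2.inj hv1 ((σ x).2.trans hv.symm), h1]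
  · exact code_succ_of_not_has (hσ x) hx

theorem code_all {A B : FDDS} {d n α : ℕ} (hA : A.DepthLe d) (hB : B.DepthLe d)
    (hn : 2 * α + d ≤ n) (hαA : A.unroll.length ≤ α) (hαB : B.unroll.length ≤ α)
    {u : A.S} {v : B.S} (hu : A.Periodic u) (hv : B.Periodic v)
    (h : A.code n u = B.code n v) (k : ℕ) : A.code k u = B.code k v := by
  obtain ⟨p, x, hp, hpα, rfl, hxp, hx, hxper⟩ := hu.back
  obtain ⟨q, y, hq, hqα, rfl, hyp, hy, hyper⟩ := hv.back
  have s1 : ∀ i, i + d ≤ n → A.code (n - i) (x i) = B.code (n - i) (y i) := by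
    intro i
    induction i with
    | zero => intro _; exact h
    | succ i ih =>
      intro hi
      have := ih (by omega)
      rw [show n - i = (n - (i + 1)) + 1 by omega] at this
      exact code_back hB (by omega) this (hx i) (hy i) (hxp _) (hyp _)
  have s2 : ∀ i, i < p + q → A.code (d + 1) (x i) = B.code (d + 1) (y i) := fun i hi =>
    code_mono (by omega) (s1 i (by omega))
  have xmod : ∀ i, x (i % p) = x i := Function.Periodic.map_mod_nat hxper
  have ymod : ∀ i, y (i % q) = y i := Function.Periodic.map_mod_nat hyper
  have s3 : ∀ i, A.code (d + 1) (x (i + q)) = A.code (d + 1) (x i) := by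
    intro i
    have hlt := Nat.mod_lt i hp
    have a1 := s2 (i % p) (by omega)
    have a2 := s2 (i % p + q) (by omega)
    rw [hyper, ← a1, xmod, ← xmod] at a2
    rw [← a2, ← xmod (i + q)]
    simp
  have s4 : ∀ i, A.code (d + 1) (x (i % q)) = A.code (d + 1) (x i) :=
    Function.Periodic.map_mod_nat (f := fun i => A.code (d + 1) (x i)) s3
  have s5 : ∀ i, A.code (d + 1) (x i) = B.code (d + 1) (y i) := by
    intro i
    have hlt := Nat.mod_lt i hq
    rw [← s4, ← ymod]
    exact s2 _ (by omega)
  have s6 : ∀ m i, A.code (d + m + 1) (x i) = B.code (d + m + 1) (y i) := by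
    intro m
    induction m with
    | zero => exact s5
    | succ m ih =>
      intro i
      exact code_lift hA hB (Nat.le_add_right d m) (ih i) (hx i) (hy i) (hxp _) (hyp _) (ih _)
  exact code_mono (by omega) (s6 k 0)

theorem code_of_cut_iso {A B : FDDS} {n : ℕ} {u : A.S} {v : B.S}
    (h : RTree.Iso ((A.unrollTree u).tcut n) ((B.unrollTree v).tcut n)) :
    A.code n u = B.code n v := by
  obtain ⟨e, he⟩ := h
  have key : ∀ m k (_ : k + m = n) (x : ((A.unrollTree u).tcut n).level k),
      A.code m x.2.1 = B.code m (e k x).2.1 := by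
    intro m
    induction m with
    | zero => intro _ _ _; rfl
    | succ m ih =>
      intro k hk x
      have hle : k + 1 ≤ n := by omega
      -- lift a preimage to a vertex
      let a : {y : A.S // A.f y = x.2.1} → ((A.unrollTree u).tcut n).level (k + 1) := fun y =>
        (⟨hle⟩, ⟨y.1, by rw [Function.iterate_succ_apply, y.2]; exact x.2.2⟩)
      have ha : ∀ y, ((A.unrollTree u).tcut n).parent k (a y) = x := by
        intro y
        refine Prod.ext (Subsingleton.elim _ _) (Subtype.ext y.2)
      let b : {y : B.S // B.f y = (e k x).2.1} → ((B.unrollTree v).tcut n).level (k + 1) :=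
        fun y => (⟨hle⟩, ⟨y.1, by rw [Function.iterate_succ_apply, y.2]; exact (e k x).2.2⟩)
      have hb : ∀ y, ((B.unrollTree v).tcut n).parent k (b y) = e k x := by
        intro y
        refine Prod.ext (Subsingleton.elim _ _) (Subtype.ext y.2)
      have hσ : ∀ y, B.f (e (k + 1) (a y)).2.1 = (e k x).2.1 := by
        intro y
        have := he k (a y)
        rw [ha] at this
        rw [this]
        rfl
      have hτ : ∀ y, A.f ((e (k + 1)).symm (b y)).2.1 = x.2.1 := by
        intro y
        have := he k ((e (k + 1)).symm (b y))
        rw [Equiv.apply_symm_apply, hb] at this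
        exact congrArg (fun z => z.2.1) ((e k).injective this)
      let σ : {y : A.S // A.f y = x.2.1} ≃ {y : B.S // B.f y = (e k x).2.1} :=
        { toFun := fun y => ⟨(e (k + 1) (a y)).2.1, hσ y⟩
          invFun := fun y => ⟨((e (k + 1)).symm (b y)).2.1, hτ y⟩
          left_inv := by
            intro y
            apply Subtype.ext
            show ((e (k + 1)).symm (b ⟨(e (k + 1) (a y)).2.1, hσ y⟩)).2.1 = y.1
            have : b ⟨(e (k + 1) (a y)).2.1, hσ y⟩ = e (k + 1) (a y) :=
              Prod.ext (Subsingleton.elim _ _) (Subtype.ext rfl)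
            rw [this, Equiv.symm_apply_apply]
          right_inv := by
            intro y
            apply Subtype.ext
            show (e (k + 1) (a ⟨((e (k + 1)).symm (b y)).2.1, hτ y⟩)).2.1 = y.1
            have : a ⟨((e (k + 1)).symm (b y)).2.1, hτ y⟩ = (e (k + 1)).symm (b y) :=
              Prod.ext (Subsingleton.elim _ _) (Subtype.ext rfl)
            rw [this, Equiv.apply_symm_apply] }
      exact code_succ_of_equiv σ (fun y => ih (k + 1) (by omega) (a y))
  have h0 := key n 0 (by omega) (⟨Nat.zero_le n⟩, ⟨u, rfl⟩)
  have h1 : (e 0 (⟨Nat.zero_le n⟩, ⟨u, rfl⟩)).2.1 = v := (e 0 (⟨Nat.zero_le n⟩, ⟨u, rfl⟩)).2.2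
  rw [h1] at h0
  exact h0

theorem equiv_of_code_all {A B : FDDS} {s : A.S} {t : B.S}
    (h : ∀ k, A.code k s = B.code k t) :
    ∃ σ : {x : A.S // A.f x = s} ≃ {y : B.S // B.f y = t},
      ∀ x k, A.code k x.1 = B.code k (σ x).1 := by
  haveI := A.fin
  haveI := B.fin
  choose σ hσ using fun k => equiv_of_code_succ (h (k + 1))
  obtain ⟨τ, hτ⟩ := Finite.exists_infinite_fiber σ
  refine ⟨τ, fun x k => ?_⟩
  obtain ⟨m, hm, hkm⟩ := (Set.infinite_coe_iff.1 hτ).exists_gt k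
  have := hσ m x
  rw [show σ m = τ from hm] at this
  exact code_mono hkm.le this

theorem iso_of_code {A B : FDDS} {u : A.S} {v : B.S} (h : ∀ k, A.code k u = B.code k v) :
    RTree.Iso (A.unrollTree u) (B.unrollTree v) := by
  choose σ hσ using fun (s : A.S) (t : B.S) (h : ∀ k, A.code k s = B.code k t) =>
    equiv_of_code_all h
  have inj : ∀ s1 s2 t1 t2 h1 h2 a b, s1 = s2 → t1 = t2 →
      (σ s1 t1 h1 a).1 = (σ s2 t2 h2 b).1 → a.1 = b.1 := by
    intro s1 s2 t1 t2 h1 h2 a b hs ht hab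
    subst hs ht
    exact congrArg Subtype.val ((σ _ _ h1).injective (Subtype.ext hab))
  have con : ∀ s1 s2 t1 t2 h1 h2 a b, s1 = s2 → t1 = t2 → a.1 = b.1 →
      (σ s1 t1 h1 a).1 = (σ s2 t2 h2 b).1 := by
    intro s1 s2 t1 t2 h1 h2 a b hs ht hab
    subst hs ht
    rw [Subtype.ext hab]
  let G : ℕ → Type := fun n => {e : (A.unrollTree u).level n ≃ (B.unrollTree v).level n //
    ∀ x k, A.code k x.1 = B.code k (e x).1}
  have step : ∀ n (e : G n), ∃ e' : G (n + 1), ∀ x : (A.unrollTree u).level (n + 1),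
      e.1 ((A.unrollTree u).parent n x) = (B.unrollTree v).parent n (e'.1 x) := by
    rintro n ⟨e, he⟩
    let P := (A.unrollTree u).parent n
    let g : (A.unrollTree u).level (n + 1) → (B.unrollTree v).level (n + 1) := fun x =>
      ⟨(σ (P x).1 (e (P x)).1 (he (P x)) ⟨x.1, rfl⟩).1, by
        rw [Function.iterate_succ_apply, (σ (P x).1 (e (P x)).1 (he (P x)) ⟨x.1, rfl⟩).2]
        exact (e (P x)).2⟩
    have hg : ∀ x, e (P x) = (B.unrollTree v).parent n (g x) := fun x =>
      Subtype.ext (σ (P x).1 (e (P x)).1 (he (P x)) ⟨x.1, rfl⟩).2.symm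
    have hbij : Function.Bijective g := by
      constructor
      · intro x y hxy
        have h1 : P x = P y := e.injective (by rw [hg, hg, hxy])
        exact Subtype.ext (inj (P x).1 (P y).1 (e (P x)).1 (e (P y)).1 (he (P x)) (he (P y))
          ⟨x.1, rfl⟩ ⟨y.1, rfl⟩ (by rw [h1]) (by rw [h1]) (congrArg Subtype.val hxy))
      · intro y
        obtain ⟨z, hz⟩ := e.surjective ((B.unrollTree v).parent n y)
        have hy : B.f y.1 = (e z).1 := by rw [hz]; rfl
        let w := (σ z.1 (e z).1 (he z)).symm ⟨y.1, hy⟩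
        let x : (A.unrollTree u).level (n + 1) :=
          ⟨w.1, by rw [Function.iterate_succ_apply, w.2]; exact z.2⟩
        have hx : P x = z := Subtype.ext w.2
        refine ⟨x, Subtype.ext ?_⟩
        have h1 : (g x).1 = (σ z.1 (e z).1 (he z) w).1 :=
          con _ _ _ _ _ _ _ _ (by rw [hx]) (by rw [hx]) rfl
        rw [h1]
        simp [w]
    exact ⟨⟨Equiv.ofBijective g hbij, fun x k => hσ _ _ (he (P x)) ⟨x.1, rfl⟩ k⟩, hg⟩
  choose nxt hnxt using step
  let e0 : G 0 := ⟨⟨fun _ => ⟨v, rfl⟩, fun _ => ⟨u, rfl⟩, fun x => Subtype.ext x.2.symm,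
    fun x => Subtype.ext x.2.symm⟩, fun x k => by
      have : x.1 = u := x.2
      rw [this]
      exact h k⟩
  let E : ∀ n, G n := fun n => Nat.rec e0 nxt n
  exact ⟨fun n => (E n).1, fun n x => hnxt n (E n) x⟩

end FDDS

theorem RTree.Iso.tcut {t s : RTree} (h : RTree.Iso t s) (n : ℕ) :
    RTree.Iso (t.tcut n) (s.tcut n) := by
  obtain ⟨e, he⟩ := h
  refine ⟨fun k => (Equiv.refl _).prodCongr (e k), fun k x => ?_⟩
  exact Prod.ext (Subsingleton.elim _ _) (he k x.2)

end

/-- Let `A` and `B` be FDDS, `α` the number of unroll trees of `𝒰(B)`,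
and `n ≥ 2α + depth B`. Then `𝒰(A) = 𝒰(B)` iff `𝒰(A)|_n = 𝒰(B)|_n`. -/
theorem stmt7 (A B : FDDS) (n : ℕ)
    (hn : 2 * (FDDS.unroll B).length + B.depth ≤ n) :
    ForestEq (FDDS.unroll A) (FDDS.unroll B) ↔
      ForestEq (fcut (FDDS.unroll A) n) (fcut (FDDS.unroll B) n) := by
  classical
  constructor
  · intro h
    unfold ForestEq fcut at *
    rw [← Multiset.map_coe, ← Multiset.map_coe, Multiset.rel_map]
    exact h.mono (fun a _ b _ hab => hab.tcut n)
  · intro h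
    unfold ForestEq fcut at *
    have hlen : (FDDS.unroll A).length = (FDDS.unroll B).length := by
      simpa using Multiset.card_eq_card_of_rel h
    rw [← Multiset.map_coe, ← Multiset.map_coe, Multiset.rel_map] at h
    obtain ⟨LA, hLA, memA⟩ : ∃ L : List A.S, FDDS.unroll A = L.map A.unrollTree ∧
        ∀ s, s ∈ L ↔ A.Periodic s := ⟨_, rfl, fun s => by simp⟩
    obtain ⟨LB, hLB, memB⟩ : ∃ L : List B.S, FDDS.unroll B = L.map B.unrollTree ∧
        ∀ s, s ∈ L ↔ B.Periodic s := ⟨_, rfl, fun s => by simp⟩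
    have hA' := hlen.le
    have hB' := le_refl (FDDS.unroll B).length
    generalize hα : (FDDS.unroll B).length = α at hn hA' hB'
    rw [hLA, hLB, ← Multiset.map_coe, ← Multiset.map_coe, Multiset.rel_map] at h ⊢
    have h' := h.mono (p := fun a b => A.code n a = B.code n b)
      (fun a _ b _ hab => FDDS.code_of_cut_iso hab)
    have hBd := B.depthLe_depth
    have hAd : A.DepthLe B.depth := by
      refine hBd.transfer (fun u hu => ?_)
      obtain ⟨v, hv, huv⟩ := Multiset.exists_mem_of_rel_of_mem h'
        (Multiset.mem_coe.2 ((memA u).2 hu))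
      obtain ⟨p, _, hp, hpα, _⟩ := ((memB v).1 (Multiset.mem_coe.1 hv)).back
      exact ⟨v, FDDS.code_mono (by omega) huv⟩
    refine h'.mono (fun a ha b hb hab => FDDS.iso_of_code ?_)
    exact FDDS.code_all hAd hBd hn hA' (hα ▸ hB') ((memA a).1 (Multiset.mem_coe.1 ha))
      ((memB b).1 (Multiset.mem_coe.1 hb)) hab
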